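/- Let F be a division ring, (A, v) a controllable pair with A ∈ F^{n×n}, (u, B) an observable pair with B ∈ F^{k×k}, and let b ∈ F^{n×1}, d ∈ F^{1×k}, S ∈ F^{n×k}. Let p be the monic polynomial with {g : (vg)^ℓ(A) = 0} = p·F[z]. Then there exists f ∈ F[z] with deg f < n + k satisfying (vf)^ℓ(A) = b, (fu)^r(B) = d and (vfu)^{ts}(A,B) = S if and only if AS − SB = b·u − v·d. In that case the solution f is unique and is given by f(z) = Σ_{m=0}^{n−1} z^m c_m + p(z)·(Σ_{m=0}^{k−1} s_m z^m), where (c_0, …, c_{n−1})^T := 𝔠_{A,v}^{−1} b and (s_0, …, s_{k−1}) := e_n^T·𝔠_{A,v}^{−1}·S·𝔬_{u,B}^{−1} is the bottom row of 𝔠_{A,v}^{−1} S 𝔬_{u,B}^{−1}. -/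

import Mathlib

/-!
Multiplying a polynomial by `z` acts on the two-sided evaluation by the recursion
`(v f z u)^{ts} = (v f u)^{ts} B + (v f)^ℓ(A) u` (`tsEval_mul_X`). By induction on the polynomial it
gives the Sylvester identity `A (v f u)^{ts} - (v f u)^{ts} B = (v f)^ℓ(A) u - v (f u)^r(B)`
(`sylvester`), hence the necessity of the condition on `S`.

Controllability forces `deg p = n` (`natDegree_annihilator`). The same recursion on multiples of
`p`, which have left evaluation `0`, shows that the bottom row of `𝔠⁻¹ (v p h u)^{ts}` is
`(h u)^r(B)` (`bottomRow_tsEval_mul`), while polynomials of degree `< n` contribute nothing to this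
row (`bottomRow_tsEval_low`). So for the proposed `f` the left evaluation is `b`, and
`(v f u)^{ts}` and `S` have the same bottom row after multiplication by `𝔠⁻¹`. Their difference `D`
satisfies `A D - D B = v w` with `w = d - (f u)^r(B)`; as `A` acts as a shift in the basis
`v, …, Aⁿ⁻¹ v`, the rows of `𝔠⁻¹ D` vanish from the bottom up, and `w = 0`
(`sylvester_unique`).

For uniqueness, the difference of two solutions is `p h` with `deg h < k` and
`(h u)^r(B) = 0`, so `h = 0` by observability.
-/

open Polynomial Matrix Finset

section Defs

variable {F : Type*} [DivisionRing F]

/-- The scalar `c` regarded as a `1 × 1` matrix. -/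
noncomputable def oneByOne (c : F) : Matrix (Fin 1) (Fin 1) F := Matrix.of fun _ _ => c

/-- Left evaluation `(v f)^{𝔢ℓ}(A) := ∑ⱼ Aʲ v fⱼ` of `f ∈ F[z]` at an input pair `(A, v)`. -/
noncomputable def leftEval {m : Type*} [Fintype m] [DecidableEq m]
    (A : Matrix m m F) (v : Matrix m (Fin 1) F) (f : F[X]) : Matrix m (Fin 1) F :=
  ∑ j ∈ Finset.range (f.natDegree + 1), A ^ j * v * oneByOne (f.coeff j)

/-- Right evaluation `(f u)^{𝔢r}(A) := ∑ⱼ fⱼ u Aʲ` of `f ∈ F[z]` at an output pair `(u, A)`. -/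
noncomputable def rightEval {m : Type*} [Fintype m] [DecidableEq m]
    (u : Matrix (Fin 1) m F) (A : Matrix m m F) (f : F[X]) : Matrix (Fin 1) m F :=
  ∑ j ∈ Finset.range (f.natDegree + 1), oneByOne (f.coeff j) * u * A ^ j

/-- Controllability matrix `[v, Av, …, A^{n-1} v]`. -/
noncomputable def ctrbMat {n : ℕ} (A : Matrix (Fin n) (Fin n) F)
    (v : Matrix (Fin n) (Fin 1) F) : Matrix (Fin n) (Fin n) F :=
  Matrix.of fun i j => (A ^ (j : ℕ) * v) i 0

/-- Observability matrix with rows `u, uA, …, u A^{n-1}`. -/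
noncomputable def obsMat {n : ℕ} (u : Matrix (Fin 1) (Fin n) F)
    (A : Matrix (Fin n) (Fin n) F) : Matrix (Fin n) (Fin n) F :=
  Matrix.of fun i j => (u * A ^ (i : ℕ)) 0 j

/-- Left companion matrix of a (monic, degree `n`) polynomial: its columns are
`e₂, …, eₙ, -(p₀, …, p_{n-1})ᵀ`. -/
noncomputable def Cl (n : ℕ) (p : F[X]) : Matrix (Fin n) (Fin n) F :=
  Matrix.of fun i j =>
    if (j : ℕ) = n - 1 then -(p.coeff (i : ℕ)) else if (i : ℕ) = (j : ℕ) + 1 then 1 else 0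

/-- Right companion matrix: the transpose of the left one. -/
noncomputable def Cr (n : ℕ) (p : F[X]) : Matrix (Fin n) (Fin n) F := (Cl n p)ᵀ

/-- First standard basis column vector of `F^{n×1}`. -/
noncomputable def e1 (F : Type*) [DivisionRing F] (n : ℕ) : Matrix (Fin n) (Fin 1) F :=
  Matrix.of fun i _ => if (i : ℕ) = 0 then 1 else 0

/-- First standard basis row vector of `F^{1×n}`. -/
noncomputable def e1row (F : Type*) [DivisionRing F] (n : ℕ) : Matrix (Fin 1) (Fin n) F :=
  Matrix.of fun _ j => if (j : ℕ) = 0 then 1 else 0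

/-- Two-sided evaluation `(v f u)^{𝔢ts}(A,B) := ∑_{i+j+1 ≤ deg f} Aⁱ v f_{i+j+1} u Bʲ`. -/
noncomputable def tsEval {n k : ℕ} (A : Matrix (Fin n) (Fin n) F) (B : Matrix (Fin k) (Fin k) F)
    (v : Matrix (Fin n) (Fin 1) F) (u : Matrix (Fin 1) (Fin k) F) (f : F[X]) :
    Matrix (Fin n) (Fin k) F :=
  ∑ i ∈ Finset.range f.natDegree, ∑ j ∈ Finset.range f.natDegree,
    A ^ i * v * oneByOne (f.coeff (i + j + 1)) * u * B ^ j

end Defs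

/-! ### Independence of the evaluations from the summation range -/

section Helpers

variable {F : Type*} [DivisionRing F] {n k : ℕ}

lemma oneByOne_zero : oneByOne (0 : F) = 0 := rfl

lemma oneByOne_one : oneByOne (1 : F) = 1 := by
  ext i j
  rw [Subsingleton.elim i j, Matrix.one_apply_eq]
  rfl

lemma oneByOne_add (a b : F) : oneByOne (a + b) = oneByOne a + oneByOne b := rfl

lemma leftEval_eq (A : Matrix (Fin n) (Fin n) F) (v : Matrix (Fin n) (Fin 1) F) (f : F[X])
    {N : ℕ} (hN : f.natDegree < N) :
    leftEval A v f = ∑ j ∈ range N, A ^ j * v * oneByOne (f.coeff j) := by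
  refine sum_subset (range_mono hN) fun j _ hj => ?_
  rw [coeff_eq_zero_of_natDegree_lt (by simpa using hj), oneByOne_zero, Matrix.mul_zero]

lemma rightEval_eq (u : Matrix (Fin 1) (Fin k) F) (B : Matrix (Fin k) (Fin k) F) (f : F[X])
    {N : ℕ} (hN : f.natDegree < N) :
    rightEval u B f = ∑ j ∈ range N, oneByOne (f.coeff j) * u * B ^ j := by
  refine sum_subset (range_mono hN) fun j _ hj => ?_
  rw [coeff_eq_zero_of_natDegree_lt (by simpa using hj), oneByOne_zero, Matrix.zero_mul,
    Matrix.zero_mul]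

/-- The ranges of the two indices may be enlarged independently, since the added coefficients
vanish. -/
lemma tsEval_eq (A : Matrix (Fin n) (Fin n) F) (B : Matrix (Fin k) (Fin k) F)
    (v : Matrix (Fin n) (Fin 1) F) (u : Matrix (Fin 1) (Fin k) F) (f : F[X])
    {N M : ℕ} (hN : f.natDegree ≤ N) (hM : f.natDegree ≤ M) :
    tsEval A B v u f = ∑ i ∈ range N, ∑ j ∈ range M,
      A ^ i * v * oneByOne (f.coeff (i + j + 1)) * u * B ^ j := by
  have h0 : ∀ i j, f.natDegree < i + j + 1 →
      A ^ i * v * oneByOne (f.coeff (i + j + 1)) * u * B ^ j = 0 := fun i j h => by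
    rw [coeff_eq_zero_of_natDegree_lt h, oneByOne_zero, Matrix.mul_zero, Matrix.zero_mul,
      Matrix.zero_mul]
  rw [tsEval, sum_subset (range_mono hN)
    fun i _ hi => sum_eq_zero fun j _ => h0 i j (by simp at hi; omega)]
  exact sum_congr rfl fun i _ => sum_subset (range_mono hM)
    fun j _ hj => h0 i j (by simp at hj; omega)

/-! ### Additivity, multiplication by `z`, and the Sylvester identity -/

section Maps

variable (A : Matrix (Fin n) (Fin n) F) (B : Matrix (Fin k) (Fin k) F)
  (v : Matrix (Fin n) (Fin 1) F) (u : Matrix (Fin 1) (Fin k) F)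

lemma leftEval_add (f g : F[X]) : leftEval A v (f + g) = leftEval A v f + leftEval A v g := by
  have h := natDegree_add_le f g
  rw [leftEval_eq A v (f + g) (N := max f.natDegree g.natDegree + 1) (by omega),
    leftEval_eq A v f (N := max f.natDegree g.natDegree + 1) (by omega),
    leftEval_eq A v g (N := max f.natDegree g.natDegree + 1) (by omega), ← sum_add_distrib]
  simp only [coeff_add, oneByOne_add, Matrix.mul_add]

lemma rightEval_add (f g : F[X]) :
    rightEval u B (f + g) = rightEval u B f + rightEval u B g := by
  have h := natDegree_add_le f g
  rw [rightEval_eq u B (f + g) (N := max f.natDegree g.natDegree + 1) (by omega),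
    rightEval_eq u B f (N := max f.natDegree g.natDegree + 1) (by omega),
    rightEval_eq u B g (N := max f.natDegree g.natDegree + 1) (by omega), ← sum_add_distrib]
  simp only [coeff_add, oneByOne_add, Matrix.add_mul]

lemma tsEval_add (f g : F[X]) :
    tsEval A B v u (f + g) = tsEval A B v u f + tsEval A B v u g := by
  have h := natDegree_add_le f g
  have hf := le_max_left f.natDegree g.natDegree
  have hg := le_max_right f.natDegree g.natDegree
  rw [tsEval_eq A B v u (f + g) h h, tsEval_eq A B v u f hf hf, tsEval_eq A B v u g hg hg]
  simp only [← sum_add_distrib, coeff_add, oneByOne_add, Matrix.add_mul, Matrix.mul_add]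

lemma leftEval_sub (f g : F[X]) : leftEval A v (f - g) = leftEval A v f - leftEval A v g := by
  rw [eq_sub_iff_add_eq, ← leftEval_add, sub_add_cancel]

lemma tsEval_sub (f g : F[X]) :
    tsEval A B v u (f - g) = tsEval A B v u f - tsEval A B v u g := by
  rw [eq_sub_iff_add_eq, ← tsEval_add, sub_add_cancel]

lemma natDegree_mul_X_le' (f : F[X]) : (f * X).natDegree ≤ f.natDegree + 1 :=
  natDegree_mul_le.trans (by simp)

lemma leftEval_mul_X (f : F[X]) : leftEval A v (f * X) = A * leftEval A v f := by
  rw [leftEval_eq A v (f * X) (Nat.lt_succ_of_le (natDegree_mul_X_le' f)), sum_range_succ',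
    leftEval, Matrix.mul_sum]
  simp [coeff_mul_X, oneByOne_zero, pow_succ', Matrix.mul_assoc]

lemma rightEval_mul_X (f : F[X]) : rightEval u B (f * X) = rightEval u B f * B := by
  rw [rightEval_eq u B (f * X) (Nat.lt_succ_of_le (natDegree_mul_X_le' f)), sum_range_succ',
    rightEval, Matrix.sum_mul]
  simp [coeff_mul_X, oneByOne_zero, pow_succ, Matrix.mul_assoc]

/-- Horner-type recursion for the two-sided evaluation: the terms with `j = 0` give the left
evaluation, the others give a shifted two-sided evaluation. -/
lemma tsEval_mul_X (f : F[X]) :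
    tsEval A B v u (f * X) = tsEval A B v u f * B + leftEval A v f * u := by
  have h := natDegree_mul_X_le' f
  rw [tsEval_eq A B v u (f * X) h h,
    tsEval_eq A B v u f (Nat.le_succ f.natDegree) le_rfl, leftEval, Matrix.sum_mul,
    Matrix.sum_mul, ← sum_add_distrib]
  refine sum_congr rfl fun i _ => ?_
  rw [sum_range_succ', Matrix.sum_mul]
  congr 1
  · refine sum_congr rfl fun j _ => ?_
    rw [coeff_mul_X, pow_succ, ← Matrix.mul_assoc, add_assoc i j 1]
  · simp [coeff_mul_X]

lemma leftEval_C (c : F) : leftEval A v (C c) = v * oneByOne c := by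
  simp [leftEval]

lemma rightEval_C (c : F) : rightEval u B (C c) = oneByOne c * u := by
  simp [rightEval]

lemma tsEval_C (c : F) : tsEval A B v u (C c) = 0 := by
  simp [tsEval]

/-- The three evaluations of any polynomial satisfy the Sylvester equation. -/
lemma sylvester (f : F[X]) :
    A * tsEval A B v u f - tsEval A B v u f * B =
      leftEval A v f * u - v * rightEval u B f := by
  induction f using Polynomial.induction_on with
  | C a => simp [tsEval_C, leftEval_C, rightEval_C, Matrix.mul_assoc]
  | add f g hf hg =>
    rw [tsEval_add, leftEval_add, rightEval_add, Matrix.mul_add, Matrix.add_mul, Matrix.mul_add,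
      Matrix.add_mul, add_sub_add_comm, hf, hg]
    abel
  | monomial m a h =>
    rw [pow_succ, ← mul_assoc]
    generalize C a * X ^ m = f at h
    have h2 := congrArg (· * B) h
    simp only [Matrix.sub_mul] at h2
    rw [tsEval_mul_X, leftEval_mul_X, rightEval_mul_X, Matrix.mul_add, Matrix.add_mul,
      ← Matrix.mul_assoc A, ← Matrix.mul_assoc A, ← Matrix.mul_assoc v, add_sub_add_comm, h2]
    abel

lemma leftEval_eq_mul {f : F[X]} (hn : 1 ≤ n) (hf : f.degree < (n : WithBot ℕ)) :
    leftEval A v f = ctrbMat A v * Matrix.of fun (i : Fin n) (_ : Fin 1) => f.coeff i := by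
  have h : f.natDegree < n := by
    by_cases h0 : f = 0
    · simp [h0]; omega
    · exact (natDegree_lt_iff_degree_lt h0).2 hf
  rw [leftEval_eq A v f h, Finset.sum_range]
  ext i j
  rw [Matrix.sum_apply, Matrix.mul_apply]
  refine sum_congr rfl fun m _ => ?_
  rw [Matrix.mul_apply, Fin.sum_univ_one]
  rfl

lemma rightEval_eq_mul {f : F[X]} (hk : 1 ≤ k) (hf : f.degree < (k : WithBot ℕ)) :
    rightEval u B f = (Matrix.of fun _ i => f.coeff (i : Fin k)) * obsMat u B := by
  have h : f.natDegree < k := by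
    by_cases h0 : f = 0
    · simp [h0]; omega
    · exact (natDegree_lt_iff_degree_lt h0).2 hf
  rw [rightEval_eq u B f h, Finset.sum_range]
  ext i j
  rw [Matrix.sum_apply, Matrix.mul_apply]
  refine sum_congr rfl fun m _ => ?_
  rw [Matrix.mul_assoc, Matrix.mul_apply]
  simp [obsMat, oneByOne, Subsingleton.elim i 0]

end Maps

/-! ### Polynomials of small degree and the annihilator of a controllable pair -/

lemma coeff_sum_fin (c : Fin n → F) (i : Fin n) :
    (∑ m : Fin n, C (c m) * X ^ (m : ℕ)).coeff i = c i := by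
  simp [coeff_X_pow, Fin.val_inj]

lemma degree_sum_fin (c : Fin n → F) :
    (∑ m : Fin n, C (c m) * X ^ (m : ℕ)).degree < (n : WithBot ℕ) :=
  Polynomial.degree_sum_fin_lt c

section Controllable

variable {A : Matrix (Fin n) (Fin n) F} {v : Matrix (Fin n) (Fin 1) F}
  {C' : Matrix (Fin n) (Fin n) F}

lemma leftEval_sum_fin (hn : 1 ≤ n) (hc : ctrbMat A v * C' = 1) (b : Matrix (Fin n) (Fin 1) F) :
    leftEval A v (∑ m : Fin n, C ((C' * b) m 0) * X ^ (m : ℕ)) = b := by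
  rw [leftEval_eq_mul A v hn (degree_sum_fin _)]
  have : (Matrix.of fun (i : Fin n) (_ : Fin 1) =>
      (∑ m : Fin n, C ((C' * b) m 0) * X ^ (m : ℕ)).coeff i) = C' * b := by
    ext i j
    rw [Matrix.of_apply, coeff_sum_fin, Subsingleton.elim j 0]
  rw [this, ← Matrix.mul_assoc, hc, Matrix.one_mul]

lemma eq_zero_of_leftEval (hn : 1 ≤ n) (hc' : C' * ctrbMat A v = 1) {f : F[X]}
    (hf : f.degree < (n : WithBot ℕ)) (h : leftEval A v f = 0) : f = 0 := by
  rw [leftEval_eq_mul A v hn hf] at h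
  have h2 := congrArg (C' * ·) h
  simp only [← Matrix.mul_assoc, hc', Matrix.one_mul, Matrix.mul_zero] at h2
  ext i
  by_cases hi : i < n
  · simpa using congrFun (congrFun h2 ⟨i, hi⟩) 0
  · rw [coeff_zero, coeff_eq_zero_of_degree_lt (hf.trans_le (by exact_mod_cast not_lt.1 hi))]

lemma eq_zero_of_rightEval {u : Matrix (Fin 1) (Fin k) F} {B O' : Matrix (Fin k) (Fin k) F}
    (hk : 1 ≤ k) (ho : obsMat u B * O' = 1) {f : F[X]}
    (hf : f.degree < (k : WithBot ℕ)) (h : rightEval u B f = 0) : f = 0 := by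
  rw [rightEval_eq_mul B u hk hf] at h
  have h2 := congrArg (· * O') h
  simp only [Matrix.mul_assoc, ho, Matrix.mul_one, Matrix.zero_mul] at h2
  ext i
  by_cases hi : i < k
  · simpa using congrFun (congrFun h2 0) ⟨i, hi⟩
  · rw [coeff_zero, coeff_eq_zero_of_degree_lt (hf.trans_le (by exact_mod_cast not_lt.1 hi))]

/-- The generator of the annihilator of a controllable pair has degree `n`: no nonzero polynomial
of smaller degree annihilates `(A, v)`, while expanding `Aⁿ v` in the basis `v, …, Aⁿ⁻¹ v` yields
an annihilating polynomial of degree `n`. -/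
lemma natDegree_annihilator (hn : 1 ≤ n) (hc : ctrbMat A v * C' = 1)
    (hc' : C' * ctrbMat A v = 1) {p : F[X]} (hp : p.Monic)
    (hpI : ∀ g : F[X], leftEval A v g = 0 ↔ ∃ h : F[X], g = p * h) : p.natDegree = n := by
  apply le_antisymm
  · set g := ∑ m : Fin n, C ((C' * (A ^ n * v)) m 0) * X ^ (m : ℕ) with hg
    have hdeg : g.degree < (n : WithBot ℕ) := degree_sum_fin _
    have hX : leftEval A v (X ^ n) = A ^ n * v := by
      have h : ∀ m : ℕ, leftEval A v (X ^ m) = A ^ m * v := fun m => by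
        induction m with
        | zero => rw [pow_zero, ← C_1, leftEval_C, oneByOne_one]; simp
        | succ m ih => rw [pow_succ, leftEval_mul_X, ih, pow_succ', Matrix.mul_assoc]
      exact h n
    have h0 : leftEval A v (X ^ n - g) = 0 := by
      rw [leftEval_sub, hX, hg, leftEval_sum_fin hn hc, sub_self]
    obtain ⟨h, hh⟩ := (hpI _).1 h0
    have hm : (X ^ n - g).natDegree = n := by
      apply natDegree_eq_of_degree_eq_some
      rw [degree_sub_eq_left_of_degree_lt (by rwa [degree_X_pow]), degree_X_pow]
    have hne : h ≠ 0 := by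
      rintro rfl
      rw [hh] at hm
      simp at hm
      omega
    rw [hh, hp.natDegree_mul' hne] at hm
    omega
  · by_contra! h
    refine hp.ne_zero (eq_zero_of_leftEval hn hc' ?_ ((hpI p).2 ⟨1, by simp⟩))
    exact (natDegree_lt_iff_degree_lt hp.ne_zero).1 h

/-! ### The bottom row of `𝔠⁻¹ (v f u)^{ts}(A, B)` -/

/-- The bottom row of a matrix, as a `1 × n` matrix. -/
def bottomRow (hn : 1 ≤ n) (M : Matrix (Fin n) (Fin k) F) : Matrix (Fin 1) (Fin k) F :=
  Matrix.of fun _ j => M ⟨n - 1, by omega⟩ j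

lemma bottomRow_mul (hn : 1 ≤ n) {l : ℕ} (M : Matrix (Fin n) (Fin k) F)
    (N : Matrix (Fin k) (Fin l) F) : bottomRow hn (M * N) = bottomRow hn M * N := rfl

/-- The columns of `𝔠` are the vectors `Aⁱ v`, so `𝔠⁻¹ Aⁱ v` is the standard basis vector `eᵢ₊₁`;
this is its last entry. -/
lemma bottomRow_mul_pow (hn : 1 ≤ n) (hc' : C' * ctrbMat A v = 1) {i : ℕ} (hi : i < n) :
    bottomRow hn C' * (A ^ i * v) = if i = n - 1 then 1 else 0 := by
  have h : ∀ m, (C' * (A ^ i * v)) m 0 = (1 : Matrix (Fin n) (Fin n) F) m ⟨i, hi⟩ := by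
    intro m
    rw [← hc']
    rfl
  rw [← bottomRow_mul]
  ext a b
  rw [Subsingleton.elim a 0, Subsingleton.elim b 0, bottomRow, Matrix.of_apply, h]
  by_cases hh : i = n - 1
  · subst hh
    rw [Matrix.one_apply_eq, if_pos rfl, Matrix.one_apply_eq]
  · rw [if_neg hh, Matrix.one_apply_ne (by simpa [Fin.ext_iff] using Ne.symm hh)]
    rfl

section Bottom

variable {B : Matrix (Fin k) (Fin k) F} {u : Matrix (Fin 1) (Fin k) F}

/-- For `deg f < n` the two-sided evaluation only involves `v, …, Aⁿ⁻² v`, whose last coordinate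
with respect to the basis `v, …, Aⁿ⁻¹ v` is zero. -/
lemma bottomRow_tsEval_low (hn : 1 ≤ n) (hc' : C' * ctrbMat A v = 1) {f : F[X]}
    (hf : f.degree < (n : WithBot ℕ)) :
    bottomRow hn C' * tsEval A B v u f = 0 := by
  have h : f.natDegree ≤ n - 1 := by
    by_cases h0 : f = 0
    · simp [h0]
    · have := (natDegree_lt_iff_degree_lt h0).2 hf
      omega
  rw [tsEval_eq A B v u f h h, Matrix.mul_sum]
  refine sum_eq_zero fun i hi => ?_
  rw [mem_range] at hi
  rw [Matrix.mul_sum]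
  refine sum_eq_zero fun j _ => ?_
  simp only [← Matrix.mul_assoc]
  rw [Matrix.mul_assoc (bottomRow hn C'), bottomRow_mul_pow hn hc' (by omega), if_neg (by omega)]
  simp

/-- Only the leading coefficient of `p c` survives in the bottom row. -/
lemma bottomRow_tsEval_mul_C (hn : 1 ≤ n) (hc' : C' * ctrbMat A v = 1) {p : F[X]}
    (hp : p.Monic) (hdeg : p.natDegree = n) (c : F) :
    bottomRow hn C' * tsEval A B v u (p * C c) = oneByOne c * u := by
  have h : (p * C c).natDegree ≤ n := (natDegree_mul_C_le p c).trans hdeg.le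
  have hlead : p.coeff n = 1 := by rw [← hdeg]; exact hp
  rw [tsEval_eq A B v u _ h h, Matrix.mul_sum, sum_eq_single (n - 1), Matrix.mul_sum,
    sum_eq_single 0]
  · have e : n - 1 + 0 + 1 = n := by omega
    simp only [← Matrix.mul_assoc]
    rw [Matrix.mul_assoc (bottomRow hn C'), bottomRow_mul_pow hn hc' (by omega), if_pos rfl, e,
      coeff_mul_C, hlead]
    simp
  · intro j _ hj
    rw [coeff_eq_zero_of_natDegree_lt (by omega), oneByOne_zero]
    simp
  · intro h; simp at h; omega
  · intro i hi hne
    rw [mem_range] at hi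
    rw [Matrix.mul_sum]
    refine sum_eq_zero fun j _ => ?_
    simp only [← Matrix.mul_assoc]
    rw [Matrix.mul_assoc (bottomRow hn C'), bottomRow_mul_pow hn hc' hi, if_neg hne]
    simp
  · intro h; simp at h; omega

/-- The key formula: the bottom row of `𝔠⁻¹ (v p h u)^{ts}(A, B)` is `(h u)^r(B)`. Since `p`
annihilates `(A, v)` on the left, the recursion `tsEval_mul_X` reduces on multiples of `p` to the
recursion of the right evaluation. -/
lemma bottomRow_tsEval_mul (hn : 1 ≤ n) (hc' : C' * ctrbMat A v = 1) {p : F[X]}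
    (hp : p.Monic) (hdeg : p.natDegree = n)
    (hpI : ∀ h : F[X], leftEval A v (p * h) = 0) (h : F[X]) :
    bottomRow hn C' * tsEval A B v u (p * h) = rightEval u B h := by
  induction h using Polynomial.induction_on with
  | C a => rw [bottomRow_tsEval_mul_C hn hc' hp hdeg, rightEval_C]
  | add f g hf hg => rw [mul_add, tsEval_add, Matrix.mul_add, hf, hg, rightEval_add]
  | monomial m a ih =>
    rw [pow_succ, ← mul_assoc (C a), ← mul_assoc p, tsEval_mul_X, hpI, rightEval_mul_X, ← ih,
      Matrix.zero_mul, add_zero, Matrix.mul_assoc]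

/-! ### The homogeneous Sylvester problem -/

/-- A solution `D` of `A D - D B = v w` for which the bottom row of `𝔠⁻¹ D` vanishes is zero, and
then so is `w`: in the coordinates `v, …, Aⁿ⁻¹ v` multiplication by `A` shifts the rows, so the
rows of `𝔠⁻¹ D` vanish one after another from the bottom up. -/
lemma sylvester_unique (hn : 1 ≤ n) (hc : ctrbMat A v * C' = 1) (hc' : C' * ctrbMat A v = 1)
    {D : Matrix (Fin n) (Fin k) F} {w : Matrix (Fin 1) (Fin k) F}
    (hD : A * D - D * B = v * w) (hbot : bottomRow hn C' * D = 0) : D = 0 ∧ w = 0 := by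
  set Y := C' * D with hY
  have hDY : D = ctrbMat A v * Y := by rw [hY, ← Matrix.mul_assoc, hc, Matrix.one_mul]
  have hlast : ∀ i : Fin n, (i : ℕ) = n - 1 → ∀ j, Y i j = 0 := by
    intro i hi j
    have := congrFun (congrFun hbot 0) j
    rw [← bottomRow_mul] at this
    have e : i = ⟨n - 1, by omega⟩ := Fin.ext hi
    rw [e]
    exact this
  -- the companion form of `A`, apart from its last column
  have hM : ∀ i m : Fin n, (m : ℕ) + 1 < n →
      (C' * A * ctrbMat A v) i m = if (i : ℕ) = m + 1 then 1 else 0 := by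
    intro i m hm
    have h1 : (A * ctrbMat A v) = fun i (m : Fin n) => (A ^ ((m : ℕ) + 1) * v) i 0 := by
      ext i m
      rw [pow_succ', Matrix.mul_assoc]
      rfl
    have h2 : (C' * A * ctrbMat A v) i m = (C' * ctrbMat A v) i ⟨m + 1, hm⟩ := by
      rw [Matrix.mul_assoc, h1]
      rfl
    rw [h2, hc', Matrix.one_apply]
    simp [Fin.ext_iff]
  have hv : ∀ i : Fin n, (C' * v) i 0 = if (i : ℕ) = 0 then 1 else 0 := by
    intro i
    have h2 : (C' * v) i 0 = (C' * ctrbMat A v) i ⟨0, hn⟩ := by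
      have : v = A ^ 0 * v := by simp
      conv_lhs => rw [this]
      rfl
    rw [h2, hc', Matrix.one_apply]
    simp [Fin.ext_iff]
  have heq : C' * A * ctrbMat A v * Y - Y * B = C' * v * w := by
    have := congrArg (C' * ·) hD
    simp only [Matrix.mul_sub, ← Matrix.mul_assoc] at this
    rw [← this, Matrix.mul_assoc (C' * A), ← hDY]
  have hzero : ∀ t : ℕ, ∀ i : Fin n, (i : ℕ) + t = n - 1 → ∀ j, Y i j = 0 := by
    intro t
    induction t with
    | zero => exact fun i hi => hlast i hi
    | succ t ih =>
      intro i hi j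
      have hi1 : (i : ℕ) + 1 < n := by omega
      have hrow := congrFun (congrFun heq ⟨i + 1, hi1⟩) j
      have hA : (C' * A * ctrbMat A v * Y) ⟨i + 1, hi1⟩ j = Y i j := by
        rw [Matrix.mul_apply, sum_eq_single i]
        · rw [hM _ i hi1]; simp
        · intro m _ hm
          by_cases hmn : (m : ℕ) + 1 < n
          · rw [hM _ m hmn, if_neg, zero_mul]
            intro h
            exact hm (Fin.ext (by simp at h; omega))
          · rw [hlast m (by omega), mul_zero]
        · simp
      have hB : (Y * B) ⟨i + 1, hi1⟩ j = 0 := by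
        rw [Matrix.mul_apply]
        refine sum_eq_zero fun m _ => ?_
        rw [ih ⟨i + 1, hi1⟩ (by simp; omega), zero_mul]
      have hw : (C' * v * w) ⟨i + 1, hi1⟩ j = 0 := by
        rw [Matrix.mul_apply, Fin.sum_univ_one, hv]
        simp
      rw [Matrix.sub_apply, hA, hB, hw, sub_zero] at hrow
      exact hrow
  have hY0 : Y = 0 := by
    ext i j
    exact hzero (n - 1 - i) i (by omega) j
  refine ⟨by rw [hDY, hY0, Matrix.mul_zero], ?_⟩
  rw [hY0, Matrix.mul_zero, Matrix.zero_mul, sub_zero] at heq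
  ext i j
  have := congrFun (congrFun heq ⟨0, hn⟩) j
  rw [Matrix.mul_apply, Fin.sum_univ_one, hv] at this
  rw [Subsingleton.elim i 0]
  simpa using this.symm

end Bottom

end Controllable

end Helpers

/-! ### The augmented two-sided interpolation problem -/

/-- Theorem `T:4.10u`: the augmented two-sided problem, with data a
controllable pair `(A,v)`, an observable pair `(u,B)` (inverses `C'`, `O'` of the
controllability/observability matrices), targets `b`, `d`, `S`, has a solution iff
`AS − SB = b·u − v·d`, in which case the solution is unique and equals
`𝔄ₙ(z)·𝔠⁻¹b + p(z)·(bottom row of 𝔠⁻¹ S 𝔬⁻¹)·𝔄_k(z)ᵀ`. -/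
theorem statement18 {F : Type*} [DivisionRing F] {n k : ℕ} (hn : 1 ≤ n) (hk : 1 ≤ k)
    (A : Matrix (Fin n) (Fin n) F) (v : Matrix (Fin n) (Fin 1) F)
    (B : Matrix (Fin k) (Fin k) F) (u : Matrix (Fin 1) (Fin k) F)
    (b : Matrix (Fin n) (Fin 1) F) (d : Matrix (Fin 1) (Fin k) F)
    (S : Matrix (Fin n) (Fin k) F)
    (C' : Matrix (Fin n) (Fin n) F)
    (hc : ctrbMat A v * C' = 1) (hc' : C' * ctrbMat A v = 1)
    (O' : Matrix (Fin k) (Fin k) F)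
    (ho : obsMat u B * O' = 1) (ho' : O' * obsMat u B = 1)
    (p : F[X]) (hp : p.Monic)
    (hpI : ∀ g : F[X], leftEval A v g = 0 ↔ ∃ h : F[X], g = p * h) :
    ((∃ f : F[X], f.degree < ((n + k : ℕ) : WithBot ℕ) ∧ leftEval A v f = b ∧
        rightEval u B f = d ∧ tsEval A B v u f = S) ↔
      A * S - S * B = b * u - v * d) ∧
    (A * S - S * B = b * u - v * d →
      ∀ f0 : F[X],
        f0 = (∑ m : Fin n, X ^ (m : ℕ) * Polynomial.C ((C' * b) m 0)) +
          p * (∑ m : Fin k,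
            Polynomial.C ((C' * S * O') (⟨n - 1, by omega⟩ : Fin n) m) * X ^ (m : ℕ)) →
        (f0.degree < ((n + k : ℕ) : WithBot ℕ) ∧ leftEval A v f0 = b ∧
          rightEval u B f0 = d ∧ tsEval A B v u f0 = S ∧
          ∀ f : F[X], f.degree < ((n + k : ℕ) : WithBot ℕ) → leftEval A v f = b →
            rightEval u B f = d → tsEval A B v u f = S → f = f0)) := by
  have hdeg : p.natDegree = n := natDegree_annihilator hn hc hc' hp hpI
  have hpI' : ∀ h : F[X], leftEval A v (p * h) = 0 := fun h => (hpI _).2 ⟨h, rfl⟩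
  have key : A * S - S * B = b * u - v * d →
      ∀ f0 : F[X],
        f0 = (∑ m : Fin n, X ^ (m : ℕ) * Polynomial.C ((C' * b) m 0)) +
          p * (∑ m : Fin k,
            Polynomial.C ((C' * S * O') (⟨n - 1, by omega⟩ : Fin n) m) * X ^ (m : ℕ)) →
        (f0.degree < ((n + k : ℕ) : WithBot ℕ) ∧ leftEval A v f0 = b ∧
          rightEval u B f0 = d ∧ tsEval A B v u f0 = S ∧
          ∀ f : F[X], f.degree < ((n + k : ℕ) : WithBot ℕ) → leftEval A v f = b →
            rightEval u B f = d → tsEval A B v u f = S → f = f0) := by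
    intro hS f0 hf0
    simp only [X_pow_mul_C] at hf0
    set g := ∑ m : Fin n, C ((C' * b) m 0) * X ^ (m : ℕ) with hg
    set q := ∑ m : Fin k, C ((C' * S * O') (⟨n - 1, by omega⟩ : Fin n) m) * X ^ (m : ℕ) with hq
    have hgdeg : g.degree < (n : WithBot ℕ) := degree_sum_fin _
    have hqdeg : q.degree < (k : WithBot ℕ) := degree_sum_fin _
    have hpdeg : p.degree = (n : WithBot ℕ) := by rw [degree_eq_natDegree hp.ne_zero, hdeg]
    have hlt : f0.degree < ((n + k : ℕ) : WithBot ℕ) := by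
      rw [hf0]
      refine (degree_add_le _ _).trans_lt (max_lt (hgdeg.trans_le ?_) ?_)
      · exact_mod_cast Nat.le_add_right n k
      · by_cases h0 : q = 0
        · rw [h0, mul_zero, degree_zero]; exact WithBot.bot_lt_coe _
        · rw [degree_mul, hpdeg, degree_eq_natDegree h0]
          have := (natDegree_lt_iff_degree_lt h0).2 hqdeg
          exact_mod_cast Nat.add_lt_add_left this n
    have hleft : leftEval A v f0 = b := by
      rw [hf0, leftEval_add, hpI', add_zero, hg, leftEval_sum_fin hn hc]
    have hqr : rightEval u B q = bottomRow hn C' * S := by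
      rw [rightEval_eq_mul B u hk hqdeg]
      have : (Matrix.of fun (_ : Fin 1) (i : Fin k) => q.coeff i) =
          bottomRow hn (C' * S * O') := by
        ext i j
        rw [Matrix.of_apply, hq, coeff_sum_fin]
        rfl
      rw [this, bottomRow_mul, bottomRow_mul, Matrix.mul_assoc, ho', Matrix.mul_one]
    have hbot : bottomRow hn C' * (tsEval A B v u f0 - S) = 0 := by
      rw [Matrix.mul_sub, hf0, tsEval_add, Matrix.mul_add, bottomRow_tsEval_low hn hc' hgdeg,
        bottomRow_tsEval_mul hn hc' hp hdeg hpI', hqr, zero_add, sub_self]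
    have hsyl : A * (tsEval A B v u f0 - S) - (tsEval A B v u f0 - S) * B =
        v * (d - rightEval u B f0) := by
      have h1 := sylvester A B v u f0
      rw [hleft] at h1
      rw [Matrix.mul_sub, Matrix.sub_mul, sub_sub_sub_comm, h1, hS, Matrix.mul_sub]
      abel
    obtain ⟨hD, hw⟩ := sylvester_unique hn hc hc' hsyl hbot
    refine ⟨hlt, hleft, (sub_eq_zero.1 hw).symm, sub_eq_zero.1 hD, ?_⟩
    intro f hfdeg hfl _ hft
    obtain ⟨h, hh⟩ := (hpI (f - f0)).1 (by rw [leftEval_sub, hfl, hleft, sub_self])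
    have hr : rightEval u B h = 0 := by
      rw [← bottomRow_tsEval_mul (A := A) (v := v) hn hc' hp hdeg hpI', ← hh, tsEval_sub, hft,
        sub_eq_zero.1 hD, sub_self, Matrix.mul_zero]
    have hhdeg : h.degree < (k : WithBot ℕ) := by
      by_cases h0 : h = 0
      · rw [h0, degree_zero]; exact WithBot.bot_lt_coe _
      · have h1 : (f - f0).degree < ((n + k : ℕ) : WithBot ℕ) :=
          (degree_sub_le _ _).trans_lt (max_lt hfdeg hlt)
        rw [hh, degree_mul, hpdeg, degree_eq_natDegree h0] at h1
        rw [degree_eq_natDegree h0]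
        have h2 : n + h.natDegree < n + k := by exact_mod_cast h1
        exact_mod_cast Nat.lt_of_add_lt_add_left h2
    rw [eq_zero_of_rightEval hk ho hhdeg hr, mul_zero] at hh
    exact sub_eq_zero.1 hh
  refine ⟨⟨?_, fun hS => ?_⟩, key⟩
  · rintro ⟨f, -, rfl, rfl, rfl⟩
    exact sylvester A B v u f
  · obtain ⟨h1, h2, h3, h4, -⟩ := key hS _ rfl
    exact ⟨_, h1, h2, h3, h4⟩
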